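/- For integers p and q with 2 ≤ p < q, the ℤ[t, t⁻¹]-modules M_p and M_q are not isomorphic, where for each integer r ≥ 2, M_r denotes the quotient of the free module ℤ[t, t⁻¹]² by the submodule generated by 𝔭_r(t)·e₁, 𝔭_r(t)·e₂, and (1 − t)·e₁ − (1 − t)·e₂ (with e₁, e₂ the standard basis). -/

import Mathlib

open LaurentPolynomial

/-- The Laurent polynomial `𝔭_p(t) = Σ_{k=0}^{p} t^(p²−kp) − Σ_{k=0}^{p−1} t^(k(p+1)+1)`
in `ℤ[t, t⁻¹]`, where `t = T 1`. -/
noncomputable def frakP (p : ℕ) : LaurentPolynomial ℤ :=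
  ∑ k ∈ Finset.range (p + 1), T ((p : ℤ) ^ 2 - (k : ℤ) * p) -
    ∑ k ∈ Finset.range p, T ((k : ℤ) * (p + 1) + 1)

/-- The standard basis vectors `e₁, e₂` of the free module `ℤ[t, t⁻¹]²`. -/
noncomputable def e1 : Fin 2 → LaurentPolynomial ℤ := Pi.single 0 1
noncomputable def e2 : Fin 2 → LaurentPolynomial ℤ := Pi.single 1 1

/-- The Alexander module `M_r`: the quotient of the free module `ℤ[t, t⁻¹]²` by
the submodule generated by `𝔭_r(t)·e₁`, `𝔭_r(t)·e₂` and `(1 − t)·e₁ − (1 − t)·e₂`. -/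
noncomputable abbrev AlexanderModule (r : ℕ) :=
  (Fin 2 → LaurentPolynomial ℤ) ⧸
    Submodule.span (LaurentPolynomial ℤ)
      ({frakP r • e1, frakP r • e2,
        ((1 : LaurentPolynomial ℤ) - T 1) • e1 - ((1 : LaurentPolynomial ℤ) - T 1) • e2} : Set (Fin 2 → LaurentPolynomial ℤ))

/-!
The annihilator of `M_r` is the ideal `(𝔭_r)`: the generators `𝔭_r e₁, 𝔭_r e₂` put `𝔭_r` into it,
and the sum of coordinates maps `M_r` onto the cyclic module `ℤ[t, t⁻¹] / (𝔭_r)`. A surjection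
`M_p → M_q` therefore forces `𝔭_q ∣ 𝔭_p`. On the other hand, summing the geometric series gives
`𝔭_r (t ^ r - 1) (t ^ (r + 1) - 1) = (t ^ (r (r + 1)) - 1) (t - 1)`,
i.e. `𝔭_r` is the Alexander polynomial of the torus knot `T(r, r + 1)`. Hence a primitive
`q (q + 1)`-th root of unity is a root of `𝔭_q`, but not of `𝔭_p` when `1 ≤ p < q`.
-/

section Annihilator

variable {R : Type*} [CommRing R]

lemma annihilator_quotient_eq_of_surjective {M : Type*} [AddCommGroup M] [Module R M]
    {I : Ideal R} {N : Submodule R M} {φ : M →ₗ[R] R} (hφ : Function.Surjective φ)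
    (hIN : I • ⊤ ≤ N) (hN : N ≤ Submodule.comap φ I) :
    Module.annihilator R (M ⧸ N) = I := by
  rw [Submodule.annihilator_quotient]
  refine le_antisymm (fun r hr ↦ ?_) fun r hr ↦ Submodule.mem_colon.mpr fun x _ ↦
    hIN (Submodule.smul_mem_smul hr Submodule.mem_top)
  obtain ⟨x, hx⟩ := hφ 1
  have hrx : r • x ∈ N := Submodule.mem_colon.mp hr x (Set.mem_univ x)
  simpa [hx] using hN hrx

lemma annihilator_quotient_span_smul_single (f g : R) :
    Module.annihilator R ((Fin 2 → R) ⧸ Submodule.span R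
      ({f • Pi.single 0 1, f • Pi.single 1 1, g • Pi.single 0 1 - g • Pi.single 1 1} :
        Set (Fin 2 → R))) = Ideal.span {f} := by
  let coordSum : (Fin 2 → R) →ₗ[R] R := ∑ i, LinearMap.proj i
  have hsurj : Function.Surjective coordSum := fun r ↦ ⟨Pi.single 0 r, by simp [coordSum]⟩
  refine annihilator_quotient_eq_of_surjective hsurj ?_ ?_
  · rw [Submodule.ideal_span_singleton_smul]
    rintro _ ⟨v, -, rfl⟩
    have hv : f • v = v 0 • (f • Pi.single 0 1) + v 1 • (f • Pi.single 1 1) := by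
      ext i
      fin_cases i <;> simp [mul_comm]
    change f • v ∈ _
    rw [hv]
    exact add_mem (Submodule.smul_mem _ _ (Submodule.subset_span (by simp)))
      (Submodule.smul_mem _ _ (Submodule.subset_span (by simp)))
  · rw [Submodule.span_le]
    rintro v (rfl | rfl | rfl) <;> simp [coordSum]

end Annihilator

theorem annihilator_alexanderModule (r : ℕ) :
    Module.annihilator ℤ[T;T⁻¹] (AlexanderModule r) = Ideal.span {frakP r} :=
  annihilator_quotient_span_smul_single (frakP r) (1 - T 1)

lemma frakP_dvd_of_surjective {p q : ℕ} {φ : AlexanderModule p →ₗ[ℤ[T;T⁻¹]] AlexanderModule q}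
    (hφ : Function.Surjective φ) : frakP q ∣ frakP p := by
  have hle := φ.annihilator_le_of_surjective hφ
  rwa [annihilator_alexanderModule, annihilator_alexanderModule,
    Ideal.span_singleton_le_span_singleton] at hle

lemma frakP_eq_geom_sum (p : ℕ) :
    frakP p = ∑ k ∈ Finset.range (p + 1), ((T 1 : ℤ[T;T⁻¹]) ^ p) ^ k -
      T 1 * ∑ k ∈ Finset.range p, (T 1 ^ (p + 1)) ^ k := by
  rw [frakP, Finset.mul_sum, ← Finset.sum_range_reflect (fun k ↦ ((T 1 : ℤ[T;T⁻¹]) ^ p) ^ k)]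
  congr 1 <;> refine Finset.sum_congr rfl fun k hk ↦ ?_
  · have hkp : k ≤ p := Finset.mem_range_succ_iff.mp hk
    rw [← pow_mul, T_pow, Nat.add_sub_cancel]
    push_cast [hkp]
    ring_nf
  · rw [← pow_mul, ← pow_succ', T_pow]
    push_cast
    ring_nf

theorem frakP_mul_pow_sub_one_mul_pow_sub_one (p : ℕ) :
    frakP p * ((T 1 ^ p - 1) * (T 1 ^ (p + 1) - 1)) = (T 1 ^ (p * (p + 1)) - 1) * (T 1 - 1) := by
  have h₁ := geom_sum_mul ((T 1 : ℤ[T;T⁻¹]) ^ p) (p + 1)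
  have h₂ := geom_sum_mul ((T 1 : ℤ[T;T⁻¹]) ^ (p + 1)) p
  rw [← pow_mul] at h₁ h₂
  rw [mul_comm (p + 1) p] at h₂
  rw [frakP_eq_geom_sum]
  linear_combination (T 1 ^ (p + 1) - 1) * h₁ - T 1 * (T 1 ^ p - 1) * h₂

section Roots

variable {K : Type*} [CommRing K] (φ : ℤ[T;T⁻¹] →+* K)

lemma map_frakP_mul (p : ℕ) :
    φ (frakP p) * ((φ (T 1) ^ p - 1) * (φ (T 1) ^ (p + 1) - 1)) =
      (φ (T 1) ^ (p * (p + 1)) - 1) * (φ (T 1) - 1) := by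
  simpa only [map_mul, map_sub, map_pow, map_one] using
    congrArg φ (frakP_mul_pow_sub_one_mul_pow_sub_one p)

variable [NoZeroDivisors K] {p : ℕ}

lemma map_frakP_eq_zero (hp : 2 ≤ p) (hz : IsPrimitiveRoot (φ (T 1)) (p * (p + 1))) :
    φ (frakP p) = 0 := by
  have hmul := map_frakP_mul φ p
  rw [hz.pow_eq_one, sub_self, zero_mul] at hmul
  refine (mul_eq_zero.mp hmul).resolve_right (mul_ne_zero ?_ ?_) <;>
    exact sub_ne_zero.mpr (hz.pow_ne_one_of_pos_of_lt (by lia) (by nlinarith))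

lemma map_frakP_ne_zero (hz : φ (T 1) ^ (p * (p + 1)) ≠ 1) : φ (frakP p) ≠ 0 := by
  intro hzero
  have hmul := map_frakP_mul φ p
  rw [hzero, zero_mul, eq_comm] at hmul
  have hz₁ : φ (T 1) ≠ 1 := fun h ↦ hz (by rw [h, one_pow])
  exact mul_ne_zero (sub_ne_zero.mpr hz) (sub_ne_zero.mpr hz₁) hmul

end Roots

theorem not_frakP_dvd_frakP {p q : ℕ} (hp : 0 < p) (hpq : p < q) : ¬ frakP q ∣ frakP p := by
  intro hdvd
  have hq : q * (q + 1) ≠ 0 := mul_ne_zero (by lia) q.succ_ne_zero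
  have hζ := Complex.isPrimitiveRoot_exp (q * (q + 1)) hq
  let φ : ℤ[T;T⁻¹] →+* ℂ := eval₂ (Int.castRingHom ℂ) (hζ.isUnit hq).unit
  have hφ : IsPrimitiveRoot (φ (T 1)) (q * (q + 1)) := by simpa [φ] using hζ
  have hφp : φ (T 1) ^ (p * (p + 1)) ≠ 1 :=
    hφ.pow_ne_one_of_pos_of_lt (by positivity) (by nlinarith)
  have hφq : φ (frakP q) = 0 := map_frakP_eq_zero φ (by lia) hφ
  exact map_frakP_ne_zero φ hφp (zero_dvd_iff.mp (hφq ▸ map_dvd φ hdvd))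

theorem alexanderModules_not_isomorphic_general {p q : ℕ} (hp : 0 < p) (hpq : p < q)
    (φ : AlexanderModule p →ₗ[ℤ[T;T⁻¹]] AlexanderModule q) : ¬ Function.Surjective φ :=
  fun hφ ↦ not_frakP_dvd_frakP hp hpq (frakP_dvd_of_surjective hφ)

/-- For `2 ≤ p < q`, the `ℤ[t, t⁻¹]`-modules `M_p` and `M_q` are not isomorphic. -/
theorem alexanderModules_not_isomorphic (p q : ℕ) (hp : 2 ≤ p) (hpq : p < q) :
    ¬ Nonempty (AlexanderModule p ≃ₗ[LaurentPolynomial ℤ] AlexanderModule q) := by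
  rintro ⟨e⟩
  exact alexanderModules_not_isomorphic_general (by lia) hpq e.toLinearMap e.surjective
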